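/- arXiv:2312.08930 — 2 statements merged into one kernel-verified Lean document; each statement's English description precedes it below -/
import Mathlib

section
/- Let n ≥ 3 be odd and let D_{2n} be the dihedral group of order 2n. Then the Laplacian eigenvalues of the order super commuting graph Δ^o(D_{2n}) are exactly: 0 with multiplicity 1, 1 with multiplicity 1, n with multiplicity n − 2, n + 1 with multiplicity n − 1, and 2n with multiplicity 1; equivalently, χ(L(Δ^o(D_{2n})), x) = x(x − 1)(x − n)^{n−2}(x − n − 1)^{n−1}(x − 2n). -/
/-!
If `M u = c u`, the rank-one update `M + u vᵀ` trades the eigenvalue `c` for `c + u ⬝ v` and keeps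
the rest of the spectrum. The all-ones vector lies in the kernel of every Laplacian `L`, so adding
the all-ones matrix `J` changes only one eigenvalue. As `L(G ∨ H) + J` is block diagonal, the
spectrum of a join `G ∨ H` can be read off from those of `G` and `H`.

For odd `n`, no rotation of `D_{2n}` has order `2`, and no rotation but the identity commutes with
a reflection. Hence `Δ^o(D_{2n})` is the join `K_1 ∨ (K_{n-1} ⊔ K_n)` of the identity with the
nontrivial rotations and the reflections.
-/

open Polynomial

noncomputable section
open scoped Classical

/-- The adjacency matrix (over ℝ) of a finite simple graph. -/
def adjMat {V : Type*} [Fintype V] (Γ : SimpleGraph V) : Matrix V V ℝ :=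
  fun u v => if Γ.Adj u v then 1 else 0

/-- The Laplacian matrix `D − A` of a finite simple graph, where `D` is the diagonal
matrix of vertex degrees. -/
def lapMat {V : Type*} [Fintype V] (Γ : SimpleGraph V) : Matrix V V ℝ :=
  Matrix.diagonal (fun v => ((Finset.univ.filter fun u => Γ.Adj v u).card : ℝ)) - adjMat Γ

/-- The `R`-super graph of `Γ`: two distinct vertices are adjacent iff they are
`R`-equivalent or some members of their respective `R`-classes are adjacent in `Γ`. -/
def superGraph {V : Type*} (Γ : SimpleGraph V) (R : Setoid V) : SimpleGraph V :=
  SimpleGraph.fromRel fun u v =>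
    R.r u v ∨ ∃ u' v', R.r u u' ∧ R.r v v' ∧ Γ.Adj u' v'

/-- The `R`-compressed graph of `Γ`, on the set of `R`-classes: two distinct classes are
adjacent iff some vertex of one is adjacent in `Γ` to some vertex of the other. -/
def compressedGraph {V : Type*} (Γ : SimpleGraph V) (R : Setoid V) :
    SimpleGraph (Quotient R) :=
  SimpleGraph.fromRel fun c d => ∃ x y, Quotient.mk R x = c ∧ Quotient.mk R y = d ∧ Γ.Adj x y

/-- The generalized join `I[K_{n i}]` of complete graphs along the graph `I`:
the vertex `i` of `I` is replaced by the complete graph on `Fin (n i)`, and all edges are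
put between the `i`-th and `j`-th complete graphs whenever `i` and `j` are adjacent in `I`. -/
def genJoinK {ι : Type*} (I : SimpleGraph ι) (n : ι → ℕ) : SimpleGraph (Σ i, Fin (n i)) :=
  SimpleGraph.fromRel fun a b => a.1 = b.1 ∨ I.Adj a.1 b.1

/-- The star graph `K_{1,k-1}` on `Fin k`, whose central vertex is the one with value `0`. -/
def starGraph (k : ℕ) : SimpleGraph (Fin k) :=
  SimpleGraph.fromRel fun a _b => a.val = 0

/-- The order super commuting graph `Δ^o(G)`: distinct `x, y` are adjacent iff
`o(x) = o(y)` or some distinct commuting `x', y'` satisfy `o(x') = o(x)` and `o(y') = o(y)`. -/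
def orderSuper (G : Type*) [Group G] : SimpleGraph G :=
  SimpleGraph.fromRel fun x y =>
    orderOf x = orderOf y ∨
      ∃ x' y' : G, x' ≠ y' ∧ x' * y' = y' * x' ∧ orderOf x' = orderOf x ∧ orderOf y' = orderOf y

/-- The conjugacy super commuting graph `Δ^c(G)`: distinct `x, y` are adjacent iff
`x` is conjugate to `y` or some distinct commuting `x', y'` are conjugate to `x` and `y`
respectively. -/
def conjSuper (G : Type*) [Group G] : SimpleGraph G :=
  SimpleGraph.fromRel fun x y =>
    IsConj x y ∨ ∃ x' y' : G, x' ≠ y' ∧ x' * y' = y' * x' ∧ IsConj x x' ∧ IsConj y y'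

section RankOneUpdate

open Matrix

variable {n R : Type*} [Fintype n] [DecidableEq n] [CommRing R]

lemma det_scalar_sub_vecMulVec (c : R) (u v : n → R) :
    c * (scalar n c - vecMulVec u v).det = (c - u ⬝ᵥ v) * c ^ Fintype.card n := by
  rw [← eval_charpoly, charpoly_vecMulVec]
  cases isEmpty_or_nonempty n
  · simp
  · have h : c ^ Fintype.card n = c * c ^ (Fintype.card n - 1) :=
      (mul_pow_sub_one Fintype.card_ne_zero c).symm
    simp only [eval_sub, eval_pow, eval_X, eval_smul, smul_eq_mul, h]
    ring

lemma det_sub_vecMulVec_of_mulVec_eq_smul {A : Matrix n n R} {u : n → R} {c : R}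
    (hc : IsLeftRegular c) (hu : A *ᵥ u = c • u) (v : n → R) :
    c * (A - vecMulVec u v).det = (c - u ⬝ᵥ v) * A.det := by
  have hfactor : c • (A - vecMulVec u v) = A * (scalar n c - vecMulVec u v) := by
    rw [mul_sub, mul_vecMulVec, hu, smul_vecMulVec, smul_sub, scalar_apply,
      ← smul_one_eq_diagonal, Matrix.mul_smul, Matrix.mul_one]
  apply hc.pow (Fintype.card n)
  calc c ^ Fintype.card n * (c * (A - vecMulVec u v).det)
      = c * (c • (A - vecMulVec u v)).det := by rw [det_smul]; ring
    _ = A.det * (c * (scalar n c - vecMulVec u v).det) := by rw [hfactor, det_mul]; ring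
    _ = c ^ Fintype.card n * ((c - u ⬝ᵥ v) * A.det) := by rw [det_scalar_sub_vecMulVec]; ring

theorem charpoly_add_vecMulVec_of_mulVec_eq_smul {M : Matrix n n R} {u : n → R} {c : R}
    (hu : M *ᵥ u = c • u) (v : n → R) :
    (X - C c) * (M + vecMulVec u v).charpoly = (X - C (c + u ⬝ᵥ v)) * M.charpoly := by
  have hchar : (M + vecMulVec u v).charmatrix = M.charmatrix - vecMulVec (C ∘ u) (C ∘ v) := by
    ext1 i j
    simp [charmatrix_apply, vecMulVec_apply, sub_sub]
  have heig : M.charmatrix *ᵥ (C ∘ u) = (X - C c) • (C ∘ u) := by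
    ext1 i
    have hMi : (M.map C *ᵥ (C ∘ u)) i = C c * C (u i) := by
      rw [← RingHom.map_mulVec, hu, Pi.smul_apply, smul_eq_mul, C_mul]
    simp [charmatrix, sub_mulVec, hMi, sub_mul]
  have hdot : (C ∘ u) ⬝ᵥ (C ∘ v) = C (u ⬝ᵥ v) := (RingHom.map_dotProduct C u v).symm
  rw [charpoly, hchar, det_sub_vecMulVec_of_mulVec_eq_smul (monic_X_sub_C c).isRegular.left heig,
    hdot, C_add, sub_sub, charpoly]

lemma charpoly_add_scalar (M : Matrix n n R) (c : R) :
    (M + scalar n c).charpoly = M.charpoly.comp (X - C c) := by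
  simpa only [map_neg, sub_neg_eq_add, ← sub_eq_add_neg] using charpoly_sub_scalar M (-c)

end RankOneUpdate

section Join

open SimpleGraph

variable {V W : Type*} (G : SimpleGraph V) (H : SimpleGraph W)

/-- The join of two graphs: their disjoint sum together with all edges between the two sides. -/
def graphJoin : SimpleGraph (V ⊕ W) :=
  (G ⊕g H) ⊔ completeBipartiteGraph V W

variable {G H}

@[simp]
lemma graphJoin_adj_inl_inl {v v' : V} : (graphJoin G H).Adj (.inl v) (.inl v') ↔ G.Adj v v' := by
  simp [graphJoin]

@[simp]
lemma graphJoin_adj_inr_inr {w w' : W} : (graphJoin G H).Adj (.inr w) (.inr w') ↔ H.Adj w w' := by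
  simp [graphJoin]

@[simp]
lemma graphJoin_adj_inl_inr (v : V) (w : W) : (graphJoin G H).Adj (.inl v) (.inr w) := by
  simp [graphJoin]

@[simp]
lemma graphJoin_adj_inr_inl (w : W) (v : V) : (graphJoin G H).Adj (.inr w) (.inl v) := by
  simp [graphJoin]

lemma degree_sum_inl (v : V) [Fintype (G.neighborSet v)]
    [Fintype ((G ⊕g H).neighborSet (.inl v))] : (G ⊕g H).degree (.inl v) = G.degree v := by
  have hnbr : (G ⊕g H).neighborFinset (.inl v) = (G.neighborFinset v).disjSum ∅ := by
    ext (w | w) <;> simp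
  rw [← card_neighborFinset_eq_degree, hnbr, Finset.card_disjSum, Finset.card_empty, add_zero,
    card_neighborFinset_eq_degree]

lemma degree_sum_inr (w : W) [Fintype (H.neighborSet w)]
    [Fintype ((G ⊕g H).neighborSet (.inr w))] : (G ⊕g H).degree (.inr w) = H.degree w := by
  have hnbr : (G ⊕g H).neighborFinset (.inr w) = Finset.disjSum ∅ (H.neighborFinset w) := by
    ext (v | v) <;> simp
  rw [← card_neighborFinset_eq_degree, hnbr, Finset.card_disjSum, Finset.card_empty, zero_add,
    card_neighborFinset_eq_degree]

lemma degree_graphJoin_inl [Fintype W] (v : V) [Fintype (G.neighborSet v)]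
    [Fintype ((graphJoin G H).neighborSet (.inl v))] :
    (graphJoin G H).degree (.inl v) = G.degree v + Fintype.card W := by
  have hnbr : (graphJoin G H).neighborFinset (.inl v) =
      (G.neighborFinset v).disjSum Finset.univ := by
    ext (w | w) <;> simp
  rw [← card_neighborFinset_eq_degree, hnbr, Finset.card_disjSum, Finset.card_univ,
    card_neighborFinset_eq_degree]

lemma degree_graphJoin_inr [Fintype V] (w : W) [Fintype (H.neighborSet w)]
    [Fintype ((graphJoin G H).neighborSet (.inr w))] :
    (graphJoin G H).degree (.inr w) = H.degree w + Fintype.card V := by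
  have hnbr : (graphJoin G H).neighborFinset (.inr w) =
      Finset.univ.disjSum (H.neighborFinset w) := by
    ext (v | v) <;> simp
  rw [← card_neighborFinset_eq_degree, hnbr, Finset.card_disjSum, Finset.card_univ, add_comm,
    card_neighborFinset_eq_degree]

end Join

section LaplacianCharpoly

open Matrix SimpleGraph

variable (R : Type*) [CommRing R] {V W : Type*} [Fintype V] [Fintype W] [DecidableEq V]
  [DecidableEq W] {G : SimpleGraph V} {H : SimpleGraph W} [DecidableRel G.Adj] [DecidableRel H.Adj]

lemma reindex_lapMatrix (e : G ≃g H) :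
    reindex e.toEquiv e.toEquiv (G.lapMatrix R) = H.lapMatrix R := by
  ext i j
  have hdeg : G.degree (e.symm i) = H.degree i := e.symm.degree_eq i
  have hadj : G.Adj (e.symm i) (e.symm j) ↔ H.Adj i j := e.symm.map_adj_iff
  have heq : e.symm i = e.symm j ↔ i = j := e.symm.injective.eq_iff
  change G.lapMatrix R (e.symm i) (e.symm j) = _
  simp [lapMatrix, degMatrix, diagonal_apply, adjMatrix_apply, hdeg, hadj, heq]

lemma charpoly_lapMatrix_congr (e : G ≃g H) :
    (G.lapMatrix R).charpoly = (H.lapMatrix R).charpoly := by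
  rw [← reindex_lapMatrix R e, charpoly_reindex]

lemma lapMatrix_top :
    (⊤ : SimpleGraph V).lapMatrix R = scalar V (Fintype.card V : R) + vecMulVec 1 (-1) := by
  ext i j
  have : Nonempty V := ⟨i⟩
  rcases eq_or_ne i j with rfl | hij
  · simp [-map_natCast, lapMatrix, degMatrix, Nat.cast_pred Fintype.card_pos, sub_eq_add_neg]
  · simp [-map_natCast, lapMatrix, degMatrix, hij]

lemma charpoly_lapMatrix_top [Nonempty V] :
    ((⊤ : SimpleGraph V).lapMatrix R).charpoly =
      X * (X - (Fintype.card V : R[X])) ^ (Fintype.card V - 1) := by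
  have heig : scalar V (Fintype.card V : R) *ᵥ 1 = (Fintype.card V : R) • 1 := by
    ext1; simp
  have hrank := charpoly_add_vecMulVec_of_mulVec_eq_smul heig (-1)
  rw [← lapMatrix_top, scalar_apply, charpoly_diagonal, dotProduct_neg, one_dotProduct_one,
    add_neg_cancel, C_0, sub_zero, Finset.prod_const, Finset.card_univ, map_natCast,
    ← mul_pow_sub_one Fintype.card_ne_zero, mul_left_comm] at hrank
  have hreg := (monic_X_sub_C (Fintype.card V : R)).isRegular.left
  rw [map_natCast] at hreg
  exact hreg hrank

variable (G H)

lemma lapMatrix_sum [DecidableRel (G ⊕g H).Adj] :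
    (G ⊕g H).lapMatrix R = fromBlocks (G.lapMatrix R) 0 0 (H.lapMatrix R) := by
  ext (i | i) (j | j) <;>
    simp [lapMatrix, degMatrix, diagonal_apply, adjMatrix_apply, degree_sum_inl, degree_sum_inr]

lemma charpoly_lapMatrix_sum [DecidableRel (G ⊕g H).Adj] :
    ((G ⊕g H).lapMatrix R).charpoly = (G.lapMatrix R).charpoly * (H.lapMatrix R).charpoly := by
  rw [lapMatrix_sum, charpoly_fromBlocks_zero₁₂]

lemma lapMatrix_graphJoin_add_vecMulVec_one [DecidableRel (graphJoin G H).Adj] :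
    (graphJoin G H).lapMatrix R + vecMulVec 1 1 =
      fromBlocks (G.lapMatrix R + scalar V (Fintype.card W : R) + vecMulVec 1 1) 0 0
        (H.lapMatrix R + scalar W (Fintype.card V : R) + vecMulVec 1 1) := by
  ext (i | i) (j | j)
  · rcases eq_or_ne i j with rfl | hij
    · simp [-map_natCast, lapMatrix, degMatrix, degree_graphJoin_inl]
    · simp [-map_natCast, lapMatrix, degMatrix, hij, adjMatrix_apply]
  · simp [lapMatrix, degMatrix, adjMatrix_apply]
  · simp [lapMatrix, degMatrix, adjMatrix_apply]
  · rcases eq_or_ne i j with rfl | hij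
    · simp [-map_natCast, lapMatrix, degMatrix, degree_graphJoin_inr]
    · simp [-map_natCast, lapMatrix, degMatrix, hij, adjMatrix_apply]

lemma charpoly_lapMatrix_add_vecMulVec_one :
    X * (G.lapMatrix R + vecMulVec 1 1).charpoly =
      (X - (Fintype.card V : R[X])) * (G.lapMatrix R).charpoly := by
  have hker : G.lapMatrix R *ᵥ 1 = (0 : R) • 1 :=
    (G.lapMatrix_mulVec_const_eq_zero).trans (zero_smul R 1).symm
  simpa using charpoly_add_vecMulVec_of_mulVec_eq_smul hker 1

lemma charpoly_lapMatrix_add_scalar_add_vecMulVec_one (c : R) :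
    (X - C c) * (G.lapMatrix R + scalar V c + vecMulVec 1 1).charpoly =
      (X - (C c + (Fintype.card V : R[X]))) * (G.lapMatrix R).charpoly.comp (X - C c) := by
  have hcomp := congrArg (·.comp (X - C c)) (charpoly_lapMatrix_add_vecMulVec_one R G)
  simp only [mul_comp, X_comp, sub_comp, natCast_comp] at hcomp
  rw [add_right_comm, charpoly_add_scalar, ← sub_sub, hcomp]

theorem charpoly_lapMatrix_graphJoin [DecidableRel (graphJoin G H).Adj] :
    (X - (Fintype.card W : R[X])) * (X - (Fintype.card V : R[X])) *
        ((graphJoin G H).lapMatrix R).charpoly =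
      X * (X - (Fintype.card V + Fintype.card W : R[X])) *
        (G.lapMatrix R).charpoly.comp (X - (Fintype.card W : R[X])) *
        (H.lapMatrix R).charpoly.comp (X - (Fintype.card V : R[X])) := by
  have hjoin := charpoly_lapMatrix_add_vecMulVec_one R (graphJoin G H)
  have hG := charpoly_lapMatrix_add_scalar_add_vecMulVec_one R G (Fintype.card W : R)
  have hH := charpoly_lapMatrix_add_scalar_add_vecMulVec_one R H (Fintype.card V : R)
  have hreg := (monic_X_sub_C (Fintype.card V + Fintype.card W : R)).isRegular.left
  rw [lapMatrix_graphJoin_add_vecMulVec_one, charpoly_fromBlocks_zero₁₂, Fintype.card_sum,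
    Nat.cast_add] at hjoin
  rw [map_natCast C] at hG hH
  rw [C_add, map_natCast C, map_natCast C] at hreg
  apply hreg
  linear_combination
    -(X - (Fintype.card W : R[X])) * (X - (Fintype.card V : R[X])) * hjoin +
    X * (X - (Fintype.card V : R[X])) *
      (H.lapMatrix R + scalar W (Fintype.card V : R) + vecMulVec 1 1).charpoly * hG +
    X * (X - (Fintype.card V + Fintype.card W : R[X])) *
      (G.lapMatrix R).charpoly.comp (X - (Fintype.card W : R[X])) * hH

theorem charpoly_lapMatrix_graphJoin_top_sum_top (U V W : Type*) [Fintype U] [Fintype V]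
    [Fintype W] [DecidableEq U] [DecidableEq V] [DecidableEq W] [Nonempty U] [Nonempty V]
    [Nonempty W]
    [DecidableRel (graphJoin (⊤ : SimpleGraph U)
      ((⊤ : SimpleGraph V) ⊕g (⊤ : SimpleGraph W))).Adj] :
    ((graphJoin (⊤ : SimpleGraph U)
      ((⊤ : SimpleGraph V) ⊕g (⊤ : SimpleGraph W))).lapMatrix R).charpoly =
    X * (X - (Fintype.card U : R[X])) *
      (X - (Fintype.card U + Fintype.card V : R[X])) ^ (Fintype.card V - 1) *
      (X - (Fintype.card U + Fintype.card W : R[X])) ^ (Fintype.card W - 1) *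
      (X - (Fintype.card U + Fintype.card V + Fintype.card W : R[X])) ^ Fintype.card U := by
  have hjoin := charpoly_lapMatrix_graphJoin R (⊤ : SimpleGraph U)
    ((⊤ : SimpleGraph V) ⊕g (⊤ : SimpleGraph W))
  have hreg := ((monic_X_sub_C (Fintype.card V + Fintype.card W : R)).mul
    (monic_X_sub_C (Fintype.card U : R))).isRegular.left
  simp only [charpoly_lapMatrix_sum, charpoly_lapMatrix_top, mul_comp, X_comp, pow_comp, sub_comp,
    natCast_comp, Fintype.card_sum, Nat.cast_add] at hjoin
  simp only [C_add, map_natCast C] at hreg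
  apply hreg
  beta_reduce
  rw [hjoin, ← mul_pow_sub_one Fintype.card_ne_zero]
  ring

end LaplacianCharpoly

lemma lapMat_eq_lapMatrix {V : Type*} [Fintype V] [DecidableEq V] (Γ : SimpleGraph V)
    [DecidableRel Γ.Adj] : lapMat Γ = Γ.lapMatrix ℝ := by
  have hdeg (v : V) [DecidablePred (Γ.Adj v)] :
      (Finset.univ.filter fun u => Γ.Adj v u).card = Γ.degree v := by
    rw [← SimpleGraph.card_neighborFinset_eq_degree]
    congr 1
    ext u
    simp
  ext i j
  by_cases hij : i = j <;> by_cases hadj : Γ.Adj i j <;>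
    simp [lapMat, adjMat, SimpleGraph.lapMatrix, SimpleGraph.degMatrix,
      SimpleGraph.adjMatrix_apply, hdeg, hij, hadj]

section OrderSuper

variable {G : Type*} [Group G] {x y : G}

lemma orderSuper_adj_iff :
    (orderSuper G).Adj x y ↔ x ≠ y ∧ (orderOf x = orderOf y ∨
      ∃ x' y' : G, x' ≠ y' ∧ Commute x' y' ∧ orderOf x' = orderOf x ∧ orderOf y' = orderOf y) := by
  rw [orderSuper, SimpleGraph.fromRel_adj, and_congr_right_iff]
  refine fun _ => ⟨?_, Or.inl⟩
  rintro (h | h | ⟨y', x', hne, hcomm, hy, hx⟩)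
  · exact h
  · exact .inl h.symm
  · exact .inr ⟨x', y', hne.symm, hcomm.symm, hx, hy⟩

lemma orderSuper_adj_of_orderOf_eq (hne : x ≠ y) (h : orderOf x = orderOf y) :
    (orderSuper G).Adj x y :=
  orderSuper_adj_iff.2 ⟨hne, .inl h⟩

lemma orderSuper_adj_of_commute (hne : x ≠ y) (h : Commute x y) : (orderSuper G).Adj x y :=
  orderSuper_adj_iff.2 ⟨hne, .inr ⟨x, y, hne, h, rfl, rfl⟩⟩

end OrderSuper

section Dihedral

open DihedralGroup SimpleGraph

variable {n : ℕ}

lemma orderSuper_dihedral_adj_r_r (i j : ZMod n) :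
    (orderSuper (DihedralGroup n)).Adj (r i) (r j) ↔ i ≠ j := by
  refine ⟨fun h hij => h.ne (congrArg r hij), fun hij => orderSuper_adj_of_commute (by simpa) ?_⟩
  rw [commute_iff_eq, r_mul_r, r_mul_r, add_comm]

lemma orderSuper_dihedral_adj_sr_sr (i j : ZMod n) :
    (orderSuper (DihedralGroup n)).Adj (sr i) (sr j) ↔ i ≠ j :=
  ⟨fun h hij => h.ne (congrArg sr hij),
    fun hij => orderSuper_adj_of_orderOf_eq (by simpa) (by simp)⟩

lemma orderOf_r_ne_orderOf_sr (hodd : Odd n) (i j : ZMod n) :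
    orderOf (r i) ≠ orderOf (sr j) := by
  have hdvd : orderOf (r i) ∣ n := orderOf_dvd_of_pow_eq_one (by simp)
  rw [orderOf_sr]
  exact fun h => hodd.not_two_dvd_nat (h ▸ hdvd)

lemma commute_r_sr_iff (hodd : Odd n) (i j : ZMod n) : Commute (r i) (sr j) ↔ i = 0 := by
  rw [commute_iff_eq, r_mul_sr, sr_mul_r, sr.injEq, sub_eq_iff_eq_add, add_assoc, left_eq_add,
    ZMod.add_self_eq_zero_iff_eq_zero hodd]

lemma orderSuper_dihedral_adj_r_sr (hodd : Odd n) (i j : ZMod n) :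
    (orderSuper (DihedralGroup n)).Adj (r i) (sr j) ↔ i = 0 := by
  constructor
  · intro hadj
    obtain h | ⟨x | x, y | y, -, hcomm, hx, hy⟩ := (orderSuper_adj_iff.1 hadj).2
    · exact absurd h (orderOf_r_ne_orderOf_sr hodd i j)
    · exact absurd hy (orderOf_r_ne_orderOf_sr hodd y j)
    · rw [(commute_r_sr_iff hodd x y).1 hcomm, r_zero, orderOf_one, eq_comm,
        orderOf_eq_one_iff, one_def, r.injEq] at hx
      exact hx
    · exact absurd hx.symm (orderOf_r_ne_orderOf_sr hodd i x)
    · exact absurd hx.symm (orderOf_r_ne_orderOf_sr hodd i x)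
  · rintro rfl
    exact orderSuper_adj_of_commute nofun (Commute.one_left _)

/-- For odd `n`, the graph `Δ^o(D_{2n})` as `K_1 ∨ (K_{n-1} ⊔ K_n)`, the three parts being the
identity, the nontrivial rotations and the reflections. -/
def orderSuperDihedralIso (hodd : Odd n) :
    graphJoin (⊤ : SimpleGraph {i : ZMod n // i = 0})
        ((⊤ : SimpleGraph {i : ZMod n // i ≠ 0}) ⊕g (⊤ : SimpleGraph (ZMod n))) ≃g
      orderSuper (DihedralGroup n) where
  toEquiv := (Equiv.sumAssoc _ _ _).symm.trans
    (((Equiv.sumCompl (· = 0)).sumCongr (Equiv.refl _)).trans equivSum.symm)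
  map_rel_iff' := by
    rintro (⟨i, hi⟩ | ⟨i, hi⟩ | i) (⟨j, hj⟩ | ⟨j, hj⟩ | j)
    all_goals
      simp [orderSuper_dihedral_adj_r_r, orderSuper_dihedral_adj_sr_sr,
        orderSuper_dihedral_adj_r_sr hodd, (orderSuper _).adj_comm (sr _) (r _), *, eq_comm,
        -r_zero]

end Dihedral

/-- Laplacian spectrum of the order super commuting graph of the dihedral group `D_{2n}`
for odd `n ≥ 3`: the Laplacian eigenvalues are exactly `0, 1, n, n+1, 2n` with
multiplicities `1, 1, n−2, n−1, 1`, i.e.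
`χ(L(Δ^o(D_{2n})), x) = x (x−1) (x−n)^{n−2} (x−n−1)^{n−1} (x−2n)`. -/
theorem stmt_11 (n : ℕ) [NeZero n] (hn : 3 ≤ n) (hodd : Odd n) :
    (lapMat (orderSuper (DihedralGroup n))).charpoly =
      X * (X - 1) * (X - C (n : ℝ)) ^ (n - 2) * (X - C ((n : ℝ) + 1)) ^ (n - 1) *
        (X - C (2 * (n : ℝ))) := by
  have : Fact (1 < n) := ⟨by omega⟩
  have : Nonempty {i : ZMod n // i ≠ 0} := ⟨1, one_ne_zero⟩
  have hcard : Fintype.card {i : ZMod n // i ≠ 0} = n - 1 := by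
    rw [Fintype.card_subtype_compl, Fintype.card_subtype_eq, ZMod.card]
  rw [lapMat_eq_lapMatrix, ← charpoly_lapMatrix_congr ℝ (orderSuperDihedralIso hodd),
    charpoly_lapMatrix_graphJoin_top_sum_top, hcard, Fintype.card_subtype_eq, ZMod.card,
    Nat.sub_sub, pow_one, Nat.cast_pred (by omega)]
  simp only [C_mul, C_add, C_1, map_natCast, map_ofNat, Nat.cast_one]
  ring
end
end

section
/- Let n ≥ 3 be odd and let Q_{4n} be the generalized quaternion (dicyclic) group of order 4n. Then the Laplacian eigenvalues of the order super commuting graph Δ^o(Q_{4n}) are exactly: 0 with multiplicity 1, 2 with multiplicity 1, 2n with multiplicity 2n − 3, 2n + 2 with multiplicity 2n − 1, and 4n with multiplicity 2; equivalently, χ(L(Δ^o(Q_{4n})), x) = x(x − 2)(x − 2n)^{2n−3}(x − 2n − 2)^{2n−1}(x − 4n)². -/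
/-!
For odd `n` the elements of order `4` in `Q_{4n}` are exactly those outside the cyclic subgroup
`⟨a⟩`, and such an element commutes with an element of `⟨a⟩` only if the latter is `1` or `aⁿ`.
Hence `Δ^o(Q_{4n})` is the generalized join of `K_2`, `K_{2n-2}` and `K_{2n}` along the star
`K_{1,2}` with `K_2` at the centre.

For a generalized join of complete graphs, given by a colouring `c : V → κ`, the Laplacian has the
form `D - U B Uᵀ`, where `U` is the indicator matrix of the colouring and `D` is diagonal and
constant on colour classes, so that `D U = U E` for a diagonal `κ × κ` matrix `E`. The block
matrices `[D - U B Uᵀ, 0; -B Uᵀ, E]` and `[D, 0; -B Uᵀ, E - B Uᵀ U]` are conjugate by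
`[1, U; 0, 1]`, which reduces the characteristic polynomial to that of the `κ × κ` matrix
`E - B Uᵀ U`, a Laplacian of the base graph weighted by the sizes of the colour classes.
-/

open Polynomial

noncomputable section
open scoped Classical

section Coloring

open Matrix

variable {V κ : Type*} [Fintype V] [DecidableEq κ]

/-- The number of vertices of colour `k` in the colouring `c`. -/
def fiberCard (c : V → κ) (k : κ) : ℕ :=
  (Finset.univ.filter fun v => c v = k).card

variable [Fintype κ]

theorem sum_fiberCard (c : V → κ) : ∑ k, fiberCard c k = Fintype.card V :=
  (Finset.card_eq_sum_card_fiberwise fun _ _ => Finset.mem_coe.2 (Finset.mem_univ _)).symm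

theorem sum_comp_eq_sum_fiberCard_mul {R : Type*} [NonAssocSemiring R] (c : V → κ) (f : κ → R) :
    ∑ v, f (c v) = ∑ k, fiberCard c k * f k := by
  simp only [fiberCard, ← Finset.sum_fiberwise' Finset.univ c f, Finset.sum_const, nsmul_eq_mul]

theorem prod_comp_eq_prod_pow_fiberCard {M : Type*} [CommMonoid M] (c : V → κ) (f : κ → M) :
    ∏ v, f (c v) = ∏ k, f k ^ fiberCard c k := by
  simp only [fiberCard, ← Finset.prod_fiberwise' Finset.univ c f, Finset.prod_const]

variable {R : Type*} [CommRing R] [DecidableEq V]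

/-- For `D = 0` and `E = 0` this is `Matrix.charpoly_mul_comm'`. -/
theorem charpoly_add_mul_mul_charpoly_of_mul_eq_mul {D : Matrix V V R} {E : Matrix κ κ R}
    {U : Matrix V κ R} (W : Matrix κ V R) (hU : D * U = U * E) :
    (D + U * W).charpoly * E.charpoly = D.charpoly * (E + W * U).charpoly := by
  have hSK : fromBlocks 1 U 0 1 * fromBlocks D (-(U * E)) W E =
      fromBlocks (D + U * W) 0 W E := by
    simp [fromBlocks_multiply]
  have hKS : fromBlocks D (-(U * E)) W E * fromBlocks 1 U 0 1 =
      fromBlocks D 0 W (E + W * U) := by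
    simp [fromBlocks_multiply, hU, add_comm]
  rw [← charpoly_fromBlocks_zero₁₂, ← charpoly_fromBlocks_zero₁₂, ← hSK, ← hKS,
    charpoly_mul_comm]

theorem charpoly_diagonal_add_submatrix_mul_prod (c : V → κ) (d : κ → R) (B : Matrix κ κ R) :
    (diagonal (d ∘ c) + B.submatrix c c).charpoly * ∏ k, (X - C (d k)) =
      (∏ k, (X - C (d k)) ^ fiberCard c k) *
        (diagonal d + B * diagonal fun k => (fiberCard c k : R)).charpoly := by
  let U : Matrix V κ R := (1 : Matrix κ κ R).submatrix c id
  have hDU : diagonal (d ∘ c) * U = U * diagonal d := by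
    ext v k
    by_cases h : c v = k <;> simp [U, one_apply, h]
  have hUB : U * B.submatrix id c = B.submatrix c c := by
    rw [← submatrix_mul _ _ c id c Function.bijective_id, one_mul]
  have hBU : B.submatrix id c * U = B * diagonal fun k => (fiberCard c k : R) := by
    ext k l
    have hsum := sum_comp_eq_sum_fiberCard_mul c fun m => B k m * (1 : Matrix κ κ R) m l
    rw [mul_diagonal, mul_apply]
    simpa [U, one_apply, mul_comm] using hsum
  have key := charpoly_add_mul_mul_charpoly_of_mul_eq_mul (B.submatrix id c) hDU
  simpa only [hUB, hBU, charpoly_diagonal, Function.comp_apply,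
    prod_comp_eq_prod_pow_fiberCard c fun k => X - C (d k)] using key

end Coloring

section CliqueJoin

open Matrix

variable {V κ : Type*}

/-- The generalized join along `I` of the complete graphs on the fibres of `c : V → κ`. It is
`genJoinK I n` for the first projection `c` of `Σ i, Fin (n i)`. -/
def cliqueJoin (I : SimpleGraph κ) (c : V → κ) : SimpleGraph V :=
  SimpleGraph.fromRel fun u v => c u = c v ∨ I.Adj (c u) (c v)

theorem cliqueJoin_adj {I : SimpleGraph κ} {c : V → κ} {u v : V} :
    (cliqueJoin I c).Adj u v ↔ u ≠ v ∧ (c u = c v ∨ I.Adj (c u) (c v)) := by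
  rw [cliqueJoin, SimpleGraph.fromRel_adj, eq_comm (a := c v), I.adj_comm (c v), or_self]

variable [Fintype κ] [DecidableEq κ]

/-- The Laplacian of `I` in which each vertex `k` counts with multiplicity `w k` as a neighbour;
`w = 1` gives `lapMat I`. -/
def weightedLap (I : SimpleGraph κ) (w : κ → ℝ) : Matrix κ κ ℝ :=
  diagonal (adjMat I *ᵥ w) - adjMat I * diagonal w

variable [Fintype V]

theorem adjMat_cliqueJoin [DecidableEq V] (I : SimpleGraph κ) (c : V → κ) :
    adjMat (cliqueJoin I c) = (1 + adjMat I).submatrix c c - 1 := by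
  ext u v
  by_cases huv : u = v
  · subst huv
    simp [adjMat]
  · by_cases hc : c u = c v <;> simp [adjMat, cliqueJoin_adj, huv, hc]

theorem card_filter_cliqueJoin_adj (I : SimpleGraph κ) (c : V → κ) (v : V) :
    ((Finset.univ.filter fun u => (cliqueJoin I c).Adj v u).card : ℝ) =
      ((1 + adjMat I) *ᵥ fun k => (fiberCard c k : ℝ)) (c v) - 1 := by
  have hrow : ((Finset.univ.filter fun u => (cliqueJoin I c).Adj v u).card : ℝ) =
      ∑ u, adjMat (cliqueJoin I c) v u := by
    simp [adjMat]
  rw [hrow, adjMat_cliqueJoin]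
  simp only [Matrix.sub_apply, submatrix_apply, Finset.sum_sub_distrib,
    sum_comp_eq_sum_fiberCard_mul c fun k => (1 + adjMat I) (c v) k]
  simp [mulVec, dotProduct, one_apply, mul_comm]

variable [DecidableEq V]

theorem lapMat_cliqueJoin (I : SimpleGraph κ) (c : V → κ) :
    lapMat (cliqueJoin I c) =
      diagonal (((1 + adjMat I) *ᵥ fun k => (fiberCard c k : ℝ)) ∘ c) -
        (1 + adjMat I).submatrix c c := by
  rw [lapMat, adjMat_cliqueJoin]
  ext u v
  by_cases huv : u = v
  · subst huv
    simp only [card_filter_cliqueJoin_adj, Matrix.sub_apply, diagonal_apply_eq, one_apply_eq,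
      Function.comp_apply]
    ring
  · simp [huv]

theorem charpoly_lapMat_cliqueJoin_mul_prod (I : SimpleGraph κ) (c : V → κ) :
    let w : κ → ℝ := fun k => fiberCard c k
    (lapMat (cliqueJoin I c)).charpoly * ∏ k, (X - C (((1 + adjMat I) *ᵥ w) k)) =
      (∏ k, (X - C (((1 + adjMat I) *ᵥ w) k)) ^ fiberCard c k) * (weightedLap I w).charpoly := by
  intro w
  have hsplit : diagonal (w + adjMat I *ᵥ w) = diagonal w + diagonal (adjMat I *ᵥ w) :=
    (diagonal_add _ _).symm
  have hquot : diagonal ((1 + adjMat I) *ᵥ w) + -(1 + adjMat I) * diagonal w =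
      weightedLap I w := by
    rw [weightedLap, add_mulVec, one_mulVec, hsplit]
    noncomm_ring
  have hlap : lapMat (cliqueJoin I c) =
      diagonal (((1 + adjMat I) *ᵥ w) ∘ c) + (-(1 + adjMat I)).submatrix c c := by
    rw [lapMat_cliqueJoin, sub_eq_add_neg, submatrix_neg, Pi.neg_apply, Pi.neg_apply]
  rw [hlap, ← hquot, charpoly_diagonal_add_submatrix_mul_prod]

theorem adjMat_starGraph_three : adjMat (starGraph 3) = !![0, 1, 1; 1, 0, 0; 1, 0, 0] := by
  ext i j
  fin_cases i <;> fin_cases j <;> simp [adjMat, starGraph]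

theorem charpoly_weightedLap_starGraph_three (w : Fin 3 → ℝ) :
    (weightedLap (starGraph 3) w).charpoly = X * (X - C (w 0)) * (X - C (w 0 + w 1 + w 2)) := by
  have hw : weightedLap (starGraph 3) w =
      !![w 1 + w 2, -w 1, -w 2; -w 0, w 0, 0; -w 0, 0, w 0] := by
    rw [weightedLap, adjMat_starGraph_three]
    ext i j
    fin_cases i <;> fin_cases j <;>
      simp [dotProduct, vecMul_diagonal, Fin.sum_univ_three]
  rw [hw, charpoly, det_fin_three]
  simp only [Fin.isValue, charmatrix_apply_eq, of_apply, cons_val', cons_val_zero, cons_val_fin_one,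
    map_add, cons_val_one, cons_val, ne_eq, Fin.reduceEq, not_false_eq_true, charmatrix_apply_ne,
    map_zero, neg_zero, mul_zero, sub_zero, zero_ne_one, map_neg, neg_neg, one_ne_zero, zero_mul,
    add_zero]
  ring

theorem charpoly_lapMat_cliqueJoin_starGraph_three (c : V → Fin 3) {p q r : ℕ}
    (hp : fiberCard c 0 = p) (hq : fiberCard c 1 = q + 1) (hr : fiberCard c 2 = r + 1) :
    (lapMat (cliqueJoin (starGraph 3) c)).charpoly =
      X * (X - C (p : ℝ)) * (X - C (p + q + 1 : ℝ)) ^ q * (X - C (p + r + 1 : ℝ)) ^ r *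
        (X - C (p + q + r + 2 : ℝ)) ^ p := by
  have hdeg : (1 + adjMat (starGraph 3)) *ᵥ (fun k => (fiberCard c k : ℝ)) =
      ![(p + q + r + 2 : ℝ), p + q + 1, p + r + 1] := by
    rw [adjMat_starGraph_three]
    ext i
    fin_cases i <;> simp [mulVec, dotProduct, Fin.sum_univ_three, one_apply, hp, hq, hr] <;> ring
  have htotal : (p + (q + 1 : ℕ) + (r + 1 : ℕ) : ℝ) = p + q + r + 2 := by
    push_cast
    ring
  have key := charpoly_lapMat_cliqueJoin_mul_prod (starGraph 3) c
  simp only [hdeg, charpoly_weightedLap_starGraph_three, Fin.prod_univ_three, hp, hq, hr, htotal,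
    cons_val] at key
  refine mul_right_cancel₀ (mul_ne_zero (mul_ne_zero (X_sub_C_ne_zero _) (X_sub_C_ne_zero _))
    (X_sub_C_ne_zero _)) (key.trans ?_)
  ring

end CliqueJoin

section OrderSuper

/-- The pairs with `x' = y'` account for the alternative `orderOf x = orderOf y`. -/
theorem orderSuper_adj {G : Type*} [Group G] {x y : G} :
    (orderSuper G).Adj x y ↔
      x ≠ y ∧ ∃ x' y' : G, orderOf x' = orderOf x ∧ orderOf y' = orderOf y ∧ Commute x' y' := by
  rw [orderSuper, SimpleGraph.fromRel_adj, and_congr_right_iff]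
  intro _
  constructor
  · rintro ((h | ⟨x', y', -, hc, hx, hy⟩) | (h | ⟨y', x', -, hc, hy, hx⟩))
    · exact ⟨x, x, rfl, h, Commute.refl x⟩
    · exact ⟨x', y', hx, hy, hc⟩
    · exact ⟨x, x, rfl, h.symm, Commute.refl x⟩
    · exact ⟨x', y', hx, hy, hc.symm⟩
  · rintro ⟨x', y', hx, hy, hc⟩
    obtain rfl | hne := eq_or_ne x' y'
    · exact Or.inl (Or.inl (hx.symm.trans hy))
    · exact Or.inl (Or.inr ⟨x', y', hne, hc, hx, hy⟩)

end OrderSuper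

section Quaternion

open QuaternionGroup

variable {n : ℕ}

theorem zmod_two_mul_val_natCast_self [NeZero n] : (n : ZMod (2 * n)).val = n :=
  ZMod.val_natCast_of_lt (by have := NeZero.pos n; omega)

theorem zmod_two_mul_add_self_eq_zero_iff [NeZero n] {i : ZMod (2 * n)} :
    i + i = 0 ↔ i = 0 ∨ i = (n : ZMod (2 * n)) := by
  rw [← neg_eq_iff_add_eq_zero, ZMod.neg_eq_self_iff, mul_right_inj' two_ne_zero,
    ← (ZMod.val_injective (2 * n)).eq_iff (b := n), zmod_two_mul_val_natCast_self]

theorem commute_a_xa_iff {i j : ZMod (2 * n)} : Commute (a i) (xa j) ↔ i + i = 0 := by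
  rw [commute_iff_eq, a_mul_xa, xa_mul_a, xa.injEq, sub_eq_iff_eq_add, add_assoc,
    left_eq_add]

theorem a_sq_eq_one_iff {i : ZMod (2 * n)} : (a i) ^ 2 = 1 ↔ i + i = 0 := by
  rw [sq, a_mul_a, one_def, a.injEq]

theorem orderOf_a_ne_orderOf_xa [NeZero n] (hodd : Odd n) (i j : ZMod (2 * n)) :
    orderOf (a i) ≠ orderOf (xa j) := by
  intro h
  have hdvd : 4 ∣ 2 * n := by
    rw [← orderOf_xa j, ← h, orderOf_a]
    exact Nat.div_dvd_of_dvd (Nat.gcd_dvd_left _ _)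
  obtain ⟨m, rfl⟩ := hodd
  omega

/-- The colouring of `Q_{4n}` by `0` on the central elements `1` and `aⁿ`, `1` on the rest of `⟨a⟩`
and `2` outside `⟨a⟩`. Colours are vertices of the star `K_{1,2}`, whose centre is `0`. -/
def quaternionColor : QuaternionGroup n → Fin 3
  | a i => if i + i = 0 then 0 else 1
  | xa _ => 2

theorem quaternionColor_eq_of_orderOf_eq [NeZero n] (hodd : Odd n) :
    ∀ {x y : QuaternionGroup n}, orderOf x = orderOf y → quaternionColor x = quaternionColor y
  | a i, a j, h => by
    simp only [quaternionColor, ← a_sq_eq_one_iff, ← orderOf_dvd_iff_pow_eq_one, h]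
  | a i, xa j, h => absurd h (orderOf_a_ne_orderOf_xa hodd i j)
  | xa i, a j, h => absurd h.symm (orderOf_a_ne_orderOf_xa hodd j i)
  | xa _, xa _, _ => rfl

theorem quaternionColor_eq_or_adj_of_commute :
    ∀ {x y : QuaternionGroup n}, Commute x y →
      quaternionColor x = quaternionColor y ∨
        (starGraph 3).Adj (quaternionColor x) (quaternionColor y)
  | a i, a j, _ => by
    simp only [quaternionColor]
    split_ifs <;> simp [starGraph]
  | a i, xa j, h => by simp [quaternionColor, starGraph, commute_a_xa_iff.1 h]
  | xa i, a j, h => by simp [quaternionColor, starGraph, commute_a_xa_iff.1 h.symm]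
  | xa _, xa _, _ => Or.inl rfl

theorem commute_or_orderOf_eq_of_quaternionColor_eq_or_adj [NeZero n] :
    ∀ {x y : QuaternionGroup n},
      quaternionColor x = quaternionColor y ∨
        (starGraph 3).Adj (quaternionColor x) (quaternionColor y) →
      Commute x y ∨ orderOf x = orderOf y
  | a i, a j, _ => Or.inl (by simp [commute_iff_eq, add_comm])
  | a i, xa j, h => Or.inl <| commute_a_xa_iff.2 <| by
    by_contra hi
    simp [quaternionColor, starGraph, hi] at h
  | xa i, a j, h => Or.inl <| Commute.symm <| commute_a_xa_iff.2 <| by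
    by_contra hj
    simp [quaternionColor, starGraph, hj] at h
  | xa i, xa j, _ => Or.inr (by simp only [orderOf_xa])

theorem orderSuper_quaternionGroup_eq_cliqueJoin [NeZero n] (hodd : Odd n) :
    orderSuper (QuaternionGroup n) = cliqueJoin (starGraph 3) quaternionColor := by
  ext x y
  rw [orderSuper_adj, cliqueJoin_adj, and_congr_right_iff]
  intro _
  constructor
  · rintro ⟨x', y', hx, hy, hc⟩
    rw [← quaternionColor_eq_of_orderOf_eq hodd hx, ← quaternionColor_eq_of_orderOf_eq hodd hy]
    exact quaternionColor_eq_or_adj_of_commute hc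
  · intro h
    obtain hc | ho := commute_or_orderOf_eq_of_quaternionColor_eq_or_adj h
    · exact ⟨x, y, rfl, rfl, hc⟩
    · exact ⟨x, x, rfl, ho, Commute.refl x⟩

theorem fiberCard_quaternionColor_zero [NeZero n] :
    fiberCard (quaternionColor (n := n)) 0 = 2 := by
  have hne : (0 : ZMod (2 * n)) ≠ n := by
    intro h
    have hval := zmod_two_mul_val_natCast_self (n := n)
    rw [← h, ZMod.val_zero] at hval
    exact NeZero.ne n hval.symm
  have hfiber : (Finset.univ.filter fun x : QuaternionGroup n => quaternionColor x = 0) =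
      {a 0, a (n : ZMod (2 * n))} := by
    ext (i | i)
    · rw [Finset.mem_filter]
      by_cases hi : i + i = 0 <;>
        simp [quaternionColor, hi, ← zmod_two_mul_add_self_eq_zero_iff, -a_zero]
    · rw [Finset.mem_filter]
      simp [quaternionColor, -a_zero]
  rw [fiberCard, hfiber, Finset.card_pair (by simpa only [ne_eq, a.injEq] using hne)]

theorem fiberCard_quaternionColor_two [NeZero n] :
    fiberCard (quaternionColor (n := n)) 2 = 2 * n := by
  have hfiber : (Finset.univ.filter fun x : QuaternionGroup n => quaternionColor x = 2) =
      Finset.univ.image xa := by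
    ext (i | i)
    · rw [Finset.mem_filter]
      by_cases hi : i + i = 0 <;> simp [quaternionColor, hi]
    · rw [Finset.mem_filter]
      simp [quaternionColor]
  rw [fiberCard, hfiber, Finset.card_image_of_injective _ fun _ _ => xa.inj, Finset.card_univ,
    ZMod.card]

theorem fiberCard_quaternionColor_one [NeZero n] :
    fiberCard (quaternionColor (n := n)) 1 = 2 * n - 2 := by
  have hsum := sum_fiberCard (quaternionColor (n := n))
  rw [Fin.sum_univ_three, fiberCard_quaternionColor_zero, fiberCard_quaternionColor_two,
    QuaternionGroup.card] at hsum
  omega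

end Quaternion

/-- Laplacian spectrum of the order super commuting graph of the generalized quaternion
group `Q_{4n}` for odd `n ≥ 3`: the Laplacian eigenvalues are exactly
`0, 2, 2n, 2n+2, 4n` with multiplicities `1, 1, 2n−3, 2n−1, 2`, i.e.
`χ(L(Δ^o(Q_{4n})), x) = x (x−2) (x−2n)^{2n−3} (x−2n−2)^{2n−1} (x−4n)²`. -/
theorem stmt_12 (n : ℕ) [NeZero n] (hn : 3 ≤ n) (hodd : Odd n) :
    (lapMat (orderSuper (QuaternionGroup n))).charpoly =
      X * (X - 2) * (X - C (2 * (n : ℝ))) ^ (2 * n - 3) *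
        (X - C (2 * (n : ℝ) + 2)) ^ (2 * n - 1) * (X - C (4 * (n : ℝ))) ^ 2 := by
  obtain ⟨m, rfl⟩ : ∃ m, n = m + 2 := ⟨n - 2, by omega⟩
  have hn₁ : (2 : ℝ) * (m + 2 : ℕ) = (2 : ℕ) + (2 * m + 1 : ℕ) + 1 := by push_cast; ring
  have hn₂ : (2 : ℝ) * (m + 2 : ℕ) + 2 = (2 : ℕ) + (2 * m + 3 : ℕ) + 1 := by push_cast; ring
  have hn₀ : (4 : ℝ) * (m + 2 : ℕ) = (2 : ℕ) + (2 * m + 1 : ℕ) + (2 * m + 3 : ℕ) + 2 := by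
    push_cast; ring
  rw [orderSuper_quaternionGroup_eq_cliqueJoin hodd,
    charpoly_lapMat_cliqueJoin_starGraph_three quaternionColor (q := 2 * m + 1) (r := 2 * m + 3)
      fiberCard_quaternionColor_zero (fiberCard_quaternionColor_one.trans (by omega))
      (fiberCard_quaternionColor_two.trans (by ring)),
    hn₂, hn₁, hn₀, show 2 * (m + 2) - 3 = 2 * m + 1 by omega,
    show 2 * (m + 2) - 1 = 2 * m + 3 by omega,
    Nat.cast_ofNat, map_ofNat]
end
end
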